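/- Let Cens be a truthful, effective, continuous and minimally invasive censor, let (KB, AK, Sec) be a privacy configuration and q a query sequence. Let i be the least natural number such that Cens_PK(q)_i ≠ eval(KB, q_i), and let Cens' be any censor such that Cens'_PK(q)|_{i−1} = Cens_PK(q)|_{i−1} and Cens'_PK(q)_i = eval(KB, q_i). Then cont(Cens'_PK(q), i) ⊨ □s for some s ∈ Sec. -/

import Mathlib

/-- A logic: a set (type) of formulas with a consequence relation satisfying
reflexivity, weakening and transitivity (cut). -/
structure Logic where
  Fml : Type
  Proves : Set Fml → Fml → Prop
  refl : ∀ A : Fml, Proves {A} A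
  weaken : ∀ (Γ Δ : Set Fml) (A : Fml), Proves Γ A → Proves (Γ ∪ Δ) A
  cut : ∀ (Γ Δ : Set Fml) (C A : Fml),
    Proves Γ C → Proves (Δ ∪ {C}) A → Proves (Γ ∪ Δ) A

/-- Modal formulas over a logic `L`: boxed `L`-formulas, falsum, implication. -/
inductive MFml (L : Logic) : Type where
  | box : L.Fml → MFml L
  | bot : MFml L
  | imp : MFml L → MFml L → MFml L

/-- ¬A := A → ⊥ -/
def MFml.neg {L : Logic} (A : MFml L) : MFml L := MFml.imp A MFml.bot

/-- ⊤ := ⊥ → ⊥ -/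
def MFml.top {L : Logic} : MFml L := MFml.imp MFml.bot MFml.bot

/-- A ∨ B := ¬A → B -/
def MFml.or {L : Logic} (A B : MFml L) : MFml L := MFml.imp (MFml.neg A) B

/-- An M-model is a set of sets of `L`-formulas. -/
abbrev MModel (L : Logic) := Set (Set L.Fml)

/-- Truth of a modal formula in an M-model. -/
def Sat {L : Logic} (M : MModel L) : MFml L → Prop
  | MFml.box A => ∀ w ∈ M, L.Proves w A
  | MFml.bot => False
  | MFml.imp A B => Sat M A → Sat M B

/-- `M ⊩ Γ`. -/
def SatSet {L : Logic} (M : MModel L) (Γ : Set (MFml L)) : Prop :=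
  ∀ A ∈ Γ, Sat M A

/-- Γ is satisfiable. -/
def Satisfiable {L : Logic} (Γ : Set (MFml L)) : Prop :=
  ∃ M : MModel L, SatSet M Γ

/-- Γ ⊨ A. -/
def Entails {L : Logic} (Γ : Set (MFml L)) (A : MFml L) : Prop :=
  ∀ M : MModel L, SatSet M Γ → Sat M A

/-- A privacy configuration (KB, AK, Sec). -/
structure PrivacyConfig (L : Logic) where
  KB : Set L.Fml
  AK : Set (MFml L)
  Sec : Set L.Fml
  consistent : ∃ A : L.Fml, ¬ L.Proves KB A
  truthfulStart : ∀ A ∈ AK, Sat ({KB} : MModel L) A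
  hiddenSecrets : ∀ s ∈ Sec, ¬ Entails AK (MFml.box s)

/-- The answers 𝔸 = {t, u, r}. -/
inductive Ans : Type
  | t | u | r
deriving DecidableEq

open Classical in
/-- eval(KB, q) := t if KB ⊢ q and u otherwise. -/
noncomputable def evalKB (L : Logic) (KB : Set L.Fml) (q : L.Fml) : Ans :=
  if L.Proves KB q then Ans.t else Ans.u

/-- A censor assigns an answering function (on infinite query sequences,
indexed by ℕ) to each privacy configuration. -/
abbrev Censor (L : Logic) := PrivacyConfig L → (ℕ → L.Fml) → (ℕ → Ans)

/-- A censor is continuous iff answers on an initial segment only depend on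
the queries in that initial segment. -/
def ContinuousCensor {L : Logic} (Cens : Censor L) : Prop :=
  ∀ (PK : PrivacyConfig L) (q q' : ℕ → L.Fml) (n : ℕ),
    (∀ i < n, q i = q' i) → ∀ i < n, Cens PK q i = Cens PK q' i

/-- A censor is truthful iff each answer is either the correct evaluation or refusal. -/
def Truthful {L : Logic} (Cens : Censor L) : Prop :=
  ∀ (PK : PrivacyConfig L) (q : ℕ → L.Fml) (i : ℕ),
    Cens PK q i = evalKB L PK.KB (q i) ∨ Cens PK q i = Ans.r

/-- Content of an answer to a query. -/
def contAns {L : Logic} (q : L.Fml) : Ans → MFml L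
  | Ans.t => MFml.box q
  | Ans.u => MFml.neg (MFml.box q)
  | Ans.r => MFml.top

/-- The content of the answers of a censor to a query sequence up to `n`
(0-based: queries with index `< n`), including the a priori knowledge. -/
def cont {L : Logic} (Cens : Censor L) (PK : PrivacyConfig L)
    (q : ℕ → L.Fml) (n : ℕ) : Set (MFml L) :=
  {F | ∃ i < n, F = contAns (q i) (Cens PK q i)} ∪ PK.AK

/-- The full content of a knowledge base. -/
noncomputable def fullContent (L : Logic) (KB : Set L.Fml) : Set (MFml L) :=
  {F | ∃ A : L.Fml, F = contAns A (evalKB L KB A)}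

/-- A censor is credible iff the content of its answers is always satisfiable. -/
def Credible {L : Logic} (Cens : Censor L) : Prop :=
  ∀ (PK : PrivacyConfig L) (q : ℕ → L.Fml) (n : ℕ), Satisfiable (cont Cens PK q n)

/-- A censor is effective iff the content of its answers never entails a boxed secret. -/
def Effective {L : Logic} (Cens : Censor L) : Prop :=
  ∀ (PK : PrivacyConfig L) (q : ℕ → L.Fml) (n : ℕ),
    ∀ s ∈ PK.Sec, ¬ Entails (cont Cens PK q n) (MFml.box s)

/-- A censor is minimally invasive iff whenever it distorts an answer,
replacing that answer by the correct evaluation (keeping the earlier answers)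
would violate effectiveness or credibility. -/
def MinimallyInvasive {L : Logic} (Cens : Censor L) : Prop :=
  ∀ (PK : PrivacyConfig L) (q : ℕ → L.Fml) (i : ℕ),
    Cens PK q i ≠ evalKB L PK.KB (q i) →
    ∀ Cens' : Censor L,
      (∀ j < i, Cens' PK q j = Cens PK q j) →
      Cens' PK q i = evalKB L PK.KB (q i) →
      ∃ n : ℕ,
        (∃ s ∈ PK.Sec, Entails (cont Cens' PK q n) (MFml.box s)) ∨
        ¬ Satisfiable (cont Cens' PK q n)

/-- A censor is repudiating iff for every privacy configuration and query
sequence there are alternative knowledge bases, not entailing any secret,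
producing the same answers on each initial segment. -/
def Repudiating {L : Logic} (Cens : Censor L) : Prop :=
  ∀ (PK : PrivacyConfig L) (q : ℕ → L.Fml),
    ∃ PKs : ℕ → PrivacyConfig L,
      (∀ i, (PKs i).AK = PK.AK ∧ (PKs i).Sec = PK.Sec) ∧
      (∀ n, ∀ i < n, Cens PK q i = Cens (PKs n) q i) ∧
      (∀ i, ∀ s ∈ PK.Sec, ¬ L.Proves (PKs i).KB s)

/-- A censor is non-refusing iff it never answers `r`. -/
def NonRefusing {L : Logic} (Cens : Censor L) : Prop :=
  ∀ (PK : PrivacyConfig L) (q : ℕ → L.Fml) (i : ℕ), Cens PK q i ≠ Ans.r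

/-!
Let a censor copy the corrected censor up to and including query `i` and refuse every later query.
Refusals have content `⊤`, so all that it ever discloses is the content of the corrected censor
after query `i`; minimal invasiveness therefore makes that content entail a secret or be
unsatisfiable. Being true answers and refusals, it is satisfied by the model `{KB}`, which rules
out the second case.
-/

section Models

variable {L : Logic} {M : MModel L}

theorem sat_top : Sat M MFml.top := id

theorem sat_singleton_box {w : Set L.Fml} {A : L.Fml} :
    Sat {w} (MFml.box A) ↔ L.Proves w A := by
  simp only [Sat, Set.mem_singleton_iff, forall_eq]

theorem sat_singleton_contAns_evalKB (KB : Set L.Fml) (A : L.Fml) :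
    Sat {KB} (contAns A (evalKB L KB A)) := by
  by_cases hA : L.Proves KB A
  · rw [evalKB, if_pos hA]
    exact sat_singleton_box.2 hA
  · rw [evalKB, if_neg hA]
    exact fun hbox => hA (sat_singleton_box.1 hbox)

end Models

section Content

variable {L : Logic} {Cens : Censor L} {PK : PrivacyConfig L} {q : ℕ → L.Fml} {M : MModel L}
  {n : ℕ}

theorem satSet_cont_iff :
    SatSet M (cont Cens PK q n) ↔
      (∀ j < n, Sat M (contAns (q j) (Cens PK q j))) ∧ SatSet M PK.AK := by
  constructor
  · exact fun hM => ⟨fun j hj => hM _ (.inl ⟨j, hj, rfl⟩), fun A hA => hM A (.inr hA)⟩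
  · rintro ⟨hans, hAK⟩ A (⟨j, hj, rfl⟩ | hA)
    exacts [hans j hj, hAK A hA]

theorem satSet_singleton_cont_of_truthful
    (htruth : ∀ j < n, Cens PK q j = evalKB L PK.KB (q j) ∨ Cens PK q j = Ans.r) :
    SatSet {PK.KB} (cont Cens PK q n) := by
  refine satSet_cont_iff.2 ⟨fun j hj => ?_, PK.truthfulStart⟩
  rcases htruth j hj with heval | hrefuse
  · rw [heval]
    exact sat_singleton_contAns_evalKB PK.KB (q j)
  · rw [hrefuse]
    exact sat_top

end Content

namespace Censor

variable {L : Logic} {Cens : Censor L} {PK : PrivacyConfig L} {q : ℕ → L.Fml} {n : ℕ}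

/-- The truncation of a censor at `n`: it gives the same answers at the indices `j < n` and refuses
all later queries. It isolates what the first `n` answers disclose. -/
def refuseFrom (Cens : Censor L) (n : ℕ) : Censor L :=
  fun PK q j => if j < n then Cens PK q j else Ans.r

theorem refuseFrom_of_lt {j : ℕ} (hj : j < n) : Cens.refuseFrom n PK q j = Cens PK q j :=
  if_pos hj

theorem refuseFrom_of_le {j : ℕ} (hj : n ≤ j) : Cens.refuseFrom n PK q j = Ans.r :=
  if_neg hj.not_gt

theorem satSet_cont_refuseFrom {M : MModel L} (hM : SatSet M (cont Cens PK q n)) (m : ℕ) :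
    SatSet M (cont (Cens.refuseFrom n) PK q m) := by
  obtain ⟨hans, hAK⟩ := satSet_cont_iff.1 hM
  refine satSet_cont_iff.2 ⟨fun j _ => ?_, hAK⟩
  rcases lt_or_ge j n with hj | hj
  · rw [refuseFrom_of_lt hj]
    exact hans j hj
  · rw [refuseFrom_of_le hj]
    exact sat_top

end Censor

section MinimallyInvasive

variable {L : Logic} {Cens Cens' : Censor L} {PK : PrivacyConfig L} {q : ℕ → L.Fml} {i : ℕ}

theorem MinimallyInvasive.entails_secret_or_not_satisfiable (hmin : MinimallyInvasive Cens)
    (hi : Cens PK q i ≠ evalKB L PK.KB (q i))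
    (hpre : ∀ j < i, Cens' PK q j = Cens PK q j)
    (hcorrect : Cens' PK q i = evalKB L PK.KB (q i)) :
    (∃ s ∈ PK.Sec, Entails (cont Cens' PK q (i + 1)) (MFml.box s)) ∨
      ¬ Satisfiable (cont Cens' PK q (i + 1)) := by
  have hagree : ∀ j < i + 1, Cens'.refuseFrom (i + 1) PK q j = Cens' PK q j :=
    fun _ => Censor.refuseFrom_of_lt
  obtain ⟨m, ⟨s, hs, hent⟩ | hunsat⟩ := hmin PK q i hi (Cens'.refuseFrom (i + 1))
    (fun j hj => (hagree j (hj.trans i.lt_succ_self)).trans (hpre j hj))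
    ((hagree i i.lt_succ_self).trans hcorrect)
  · exact .inl ⟨s, hs, fun M hM => hent M (Censor.satSet_cont_refuseFrom hM m)⟩
  · exact .inr fun ⟨M, hM⟩ => hunsat ⟨M, Censor.satSet_cont_refuseFrom hM m⟩

theorem first_lie_reveals_secret_general (hmin : MinimallyInvasive Cens)
    (hi : Cens PK q i ≠ evalKB L PK.KB (q i))
    (htruth : ∀ j < i, Cens PK q j = evalKB L PK.KB (q j) ∨ Cens PK q j = Ans.r)
    (hpre : ∀ j < i, Cens' PK q j = Cens PK q j)
    (hcorrect : Cens' PK q i = evalKB L PK.KB (q i)) :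
    ∃ s ∈ PK.Sec, Entails (cont Cens' PK q (i + 1)) (MFml.box s) := by
  have htruth' : ∀ j < i + 1, Cens' PK q j = evalKB L PK.KB (q j) ∨ Cens' PK q j = Ans.r := by
    intro j hj
    rcases Nat.lt_succ_iff_lt_or_eq.1 hj with hlt | rfl
    · rw [hpre j hlt]
      exact htruth j hlt
    · exact .inl hcorrect
  have hsat : Satisfiable (cont Cens' PK q (i + 1)) :=
    ⟨{PK.KB}, satSet_singleton_cont_of_truthful htruth'⟩
  exact (hmin.entails_secret_or_not_satisfiable hi hpre hcorrect).resolve_right (not_not_intro hsat)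

end MinimallyInvasive

/-- If a truthful, effective, continuous and minimally invasive
censor first distorts the answer at query `i`, then giving the correct answer
at `i` (keeping the earlier answers) would immediately reveal a secret. -/
theorem first_lie_reveals_secret {L : Logic} (Cens : Censor L)
    (htruth : Truthful Cens) (heff : Effective Cens)
    (hcont : ContinuousCensor Cens) (hmin : MinimallyInvasive Cens)
    (PK : PrivacyConfig L) (q : ℕ → L.Fml) (i : ℕ)
    (hi : Cens PK q i ≠ evalKB L PK.KB (q i))
    (hleast : ∀ j < i, Cens PK q j = evalKB L PK.KB (q j))
    (Cens' : Censor L)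
    (hpre : ∀ j < i, Cens' PK q j = Cens PK q j)
    (hcorrect : Cens' PK q i = evalKB L PK.KB (q i)) :
    ∃ s ∈ PK.Sec, Entails (cont Cens' PK q (i + 1)) (MFml.box s) :=
  first_lie_reveals_secret_general hmin hi (fun j hj => .inl (hleast j hj)) hpre hcorrect
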